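/- Let ℍ be the hyperbolic plane (the upper half-plane with its hyperbolic metric). For every ε > 0 there exists L > 0 with the following property. Let g and h be bijective self-isometries of ℍ that are hyperbolic with equal translation lengths: assume there are isometric embeddings γ_g, γ_h : ℝ → ℍ and a real l with 0 < l ≤ ε/10 such that g(γ_g(s)) = γ_g(s+l) and h(γ_h(s)) = γ_h(s+l) for all s, and ⨅_x dist(x,g(x)) = ⨅_x dist(x,h(x)) = l. Let m be the greatest positive integer with m·l ≤ ε/10, set 𝒯_ε(g) := ⋃_{i=1}^{m} {x : dist(x, g^i(x)) ≤ ε} and likewise 𝒯_ε(h). If dist(p,q) ≥ L for all p ∈ Hull(𝒯_ε(g)) and q ∈ Hull(𝒯_ε(h)), then: (1) the homomorphism ρ from the free group F₂ on two generators to the isometry group of ℍ determined by g and h is injective; and (2) for every y ∈ ℍ there exist c > 0 and C ≥ 0 such that dist(y, ρ(w)(y)) ≥ c·|w| − C for every w ∈ F₂, where |w| is the reduced word length of w. -/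

import Mathlib

open UpperHalfPlane

/-- A subset of the hyperbolic plane is (geodesically) convex if it contains every
point between two of its points. -/
def GeodesicallyConvex (A : Set UpperHalfPlane) : Prop :=
  ∀ x ∈ A, ∀ y ∈ A, ∀ z : UpperHalfPlane, dist x z + dist z y = dist x y → z ∈ A

/-- The closed convex hull of a subset of the hyperbolic plane: the intersection of all
closed convex subsets containing it. -/
def hypConvexHull (A : Set UpperHalfPlane) : Set UpperHalfPlane :=
  ⋂₀ {C : Set UpperHalfPlane | A ⊆ C ∧ IsClosed C ∧ GeodesicallyConvex C}

/-- The Margulis tube `𝒯_ε(g) = ⋃_{1 ≤ i ≤ m} {x : dist x (gⁱ x) ≤ ε}` of a hyperbolic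
isometry `g` of the hyperbolic plane. -/
def margulisTube (ε : ℝ) (g : UpperHalfPlane ≃ᵢ UpperHalfPlane) (m : ℕ) :
    Set UpperHalfPlane :=
  ⋃ i ∈ Finset.Icc 1 m, {x : UpperHalfPlane | dist x ((g ^ i) x) ≤ ε}

/-!
In the hyperboloid model, nearest-point projection to a geodesic line `γ` becomes a coordinate
`foot γ`, the first of the Fermi coordinates of `γ`; it is `1`-Lipschitz, and an isometry that
translates `γ` by `l` translates `foot γ` by `l`. Two lines at positive distance have a common
perpendicular; measure the two foot coordinates from its ends. The sets where they are at least
`l / 4` in absolute value are bounded by lines perpendicular to the axes, and they are disjoint as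
soon as `tanh (l / 4) ^ 2 * cosh D > 2`, where `D` is the distance of the axes. This holds for a
separation `L` that depends only on `ε`: for small `l` the Margulis tube contains a neighbourhood
of the axis of radius `R` with `sinh l * cosh R` bounded below, and `D ≥ 2 * R + L`.

Then ping-pong applies, and it is quantitative: the geodesic from the basepoint to its image under a
reduced word crosses in succession one region for each letter, moving by at least `l / 4` each time.
-/

section GeodesicSpace

variable {X : Type*} [PseudoMetricSpace X]

/-- A geodesic space: any two points are the endpoints of a unit speed geodesic segment. -/
def IsGeodesicSpace (X : Type*) [PseudoMetricSpace X] : Prop :=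
  ∀ x y : X, ∃ c : ℝ → X, c 0 = x ∧ c (dist x y) = y ∧
    ∀ s ∈ Set.Icc 0 (dist x y), ∀ t ∈ Set.Icc 0 (dist x y), dist (c s) (c t) = |s - t|

lemma IsGeodesicSpace.exists_eq_of_mem_Icc (hX : IsGeodesicSpace X) {u : X → ℝ}
    (hu : Continuous u) {x y : X} {a : ℝ} (ha : a ∈ Set.Icc (u x) (u y)) :
    ∃ z, u z = a ∧ dist x z + dist z y = dist x y := by
  obtain ⟨c, rfl, hy, hc⟩ := hX x y
  set D := dist (c 0) y
  have hD : 0 ≤ D := dist_nonneg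
  have hcont : ContinuousOn c (Set.Icc 0 D) := by
    refine (LipschitzOnWith.of_dist_le_mul (K := 1) fun s hs t ht => ?_).continuousOn
    rw [hc s hs t ht, NNReal.coe_one, one_mul, Real.dist_eq]
  have ha' : a ∈ Set.Icc (u (c 0)) (u (c D)) := by rwa [hy]
  obtain ⟨s, hs, hus⟩ := intermediate_value_Icc hD (hu.comp_continuousOn hcont) ha'
  refine ⟨c s, hus, ?_⟩
  rw [← hy, hc 0 (Set.left_mem_Icc.2 hD) s hs, hc s hs D (Set.right_mem_Icc.2 hD), zero_sub,
    abs_neg, abs_of_nonneg hs.1, abs_sub_comm, abs_of_nonneg (sub_nonneg.2 hs.2)]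
  ring

lemma IsGeodesicSpace.exists_dist_eq (hX : IsGeodesicSpace X) {x y : X} {r : ℝ}
    (hr : r ∈ Set.Icc 0 (dist x y)) : ∃ z, dist x z = r ∧ dist z y = dist x y - r := by
  obtain ⟨z, hz, hadd⟩ := hX.exists_eq_of_mem_Icc (continuous_const.dist continuous_id)
    (x := x) (y := y) (u := dist x) (by simpa using hr)
  exact ⟨z, hz, by linarith⟩

lemma IsGeodesicSpace.add_add_le_dist (hX : IsGeodesicSpace X) {p q : X} {r r' L : ℝ}
    (hr : 0 ≤ r) (hr' : 0 ≤ r') (hL : 0 < L)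
    (h : ∀ x ∈ Metric.closedBall p r, ∀ y ∈ Metric.closedBall q r', L ≤ dist x y) :
    r + r' + L ≤ dist p q := by
  have hle : r ≤ dist p q := by
    by_contra! hlt
    have := h q (by rw [Metric.mem_closedBall, dist_comm]; exact hlt.le) q
      (Metric.mem_closedBall_self hr')
    rw [dist_self] at this
    exact this.not_gt hL
  obtain ⟨x, hpx, hxq⟩ := hX.exists_dist_eq ⟨hr, hle⟩
  have hx : x ∈ Metric.closedBall p r := by rw [Metric.mem_closedBall, dist_comm, hpx]
  have hle' : r' ≤ dist x q := by
    by_contra! hlt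
    have := h x hx x hlt.le
    rw [dist_self] at this
    exact this.not_gt hL
  rw [dist_comm] at hle'
  obtain ⟨y, hqy, hyx⟩ := hX.exists_dist_eq ⟨hr', hle'⟩
  have := h x hx y (by rw [Metric.mem_closedBall, dist_comm, hqy])
  rw [dist_comm, hyx, dist_comm q x] at this
  linarith

end GeodesicSpace

/-! ### Ping-pong -/

section PingPong

variable {α X : Type*}

/-- The coordinate translated in the positive direction by the letter `a`. -/
def signedCoord (π : α → X → ℝ) (a : α × Bool) (x : X) : ℝ :=
  cond a.2 (π a.1 x) (-π a.1 x)

lemma abs_signedCoord (π : α → X → ℝ) (a : α × Bool) (x : X) :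
    |signedCoord π a x| = |π a.1 x| := by
  rcases a with ⟨i, _ | _⟩ <;> simp [signedCoord]

variable [PseudoMetricSpace X]

/-- Ping-pong data: each isometry `f i` translates a `1`-Lipschitz coordinate `π i` by `l i`, the
sets `{x | w i ≤ |π i x|}` are pairwise disjoint, and the basepoint `p` lies outside all of them.
Since `2 * w i < l i`, every power `f i ^ n` with `n ≠ 0` maps the complement of the `i`-th set
into it; `δ` measures by how much. -/
structure PingPongSystem (f : α → X ≃ᵢ X) (π : α → X → ℝ) (l w : α → ℝ) (δ : ℝ) (p : X) :
    Prop where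
  lipschitz : ∀ i, LipschitzWith 1 (π i)
  map_eq : ∀ i x, π i (f i x) = π i x + l i
  gap_pos : 0 < δ
  gap_le : ∀ i, δ ≤ l i / 2 - w i
  separated : Pairwise fun i j => ∀ x, |π i x| < w i ∨ |π j x| < w j
  base_lt : ∀ i, |π i p| < w i

/-- The isometry by which the letter `a` of a word in the free group acts. -/
def letterIsometry (f : α → X ≃ᵢ X) (a : α × Bool) : X ≃ᵢ X :=
  cond a.2 (f a.1) (f a.1)⁻¹

lemma lift_mk_cons_apply (f : α → X ≃ᵢ X) (a : α × Bool) (L : List (α × Bool)) (x : X) :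
    FreeGroup.lift f (FreeGroup.mk (a :: L)) x =
      letterIsometry f a (FreeGroup.lift f (FreeGroup.mk L) x) := by
  rw [FreeGroup.lift_mk, FreeGroup.lift_mk, List.map_cons, List.prod_cons]
  rfl

namespace PingPongSystem

variable {f : α → X ≃ᵢ X} {π : α → X → ℝ} {l w : α → ℝ} {δ : ℝ} {p : X}
variable (h : PingPongSystem f π l w δ p)
include h

lemma width_pos (i : α) : 0 < w i := (abs_nonneg _).trans_lt (h.base_lt i)

lemma width_lt (i : α) : w i < l i / 2 := by linarith [h.gap_pos, h.gap_le i]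

lemma lipschitzWith_signedCoord (a : α × Bool) : LipschitzWith 1 (signedCoord π a) := by
  rcases a with ⟨i, _ | _⟩
  · exact (h.lipschitz i).neg
  · exact h.lipschitz i

lemma signedCoord_sub_le_dist (a : α × Bool) (x y : X) :
    signedCoord π a x - signedCoord π a y ≤ dist x y := by
  have := (h.lipschitzWith_signedCoord a).dist_le_mul x y
  rw [NNReal.coe_one, one_mul, Real.dist_eq] at this
  exact (le_abs_self _).trans this

lemma signedCoord_letterIsometry (a : α × Bool) (x : X) :
    signedCoord π a (letterIsometry f a x) = signedCoord π a x + l a.1 := by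
  rcases a with ⟨i, _ | _⟩
  · have := h.map_eq i ((f i)⁻¹ x)
    rw [IsometryEquiv.apply_inv_self] at this
    simp only [signedCoord, letterIsometry, cond_false]
    linarith
  · exact h.map_eq i x

lemma neg_width_lt_signedCoord {a b : α × Bool} (hab : a.1 = b.1 → a.2 = b.2) {x : X}
    (hx : w b.1 ≤ signedCoord π b x) : -w a.1 < signedCoord π a x := by
  by_cases hi : a.1 = b.1
  · obtain rfl : a = b := Prod.ext hi (hab hi)
    linarith [h.width_pos a.1]
  · have hsep := h.separated hi x
    rw [← abs_signedCoord, ← abs_signedCoord] at hsep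
    have := hsep.resolve_right (hx.trans (le_abs_self _)).not_gt
    exact (abs_lt.1 this).1

lemma abs_signedCoord_base_lt (a : α × Bool) : |signedCoord π a p| < w a.1 :=
  abs_signedCoord π a p ▸ h.base_lt a.1

lemma lt_signedCoord_lift_mk {a : α × Bool} {L : List (α × Bool)}
    (hL : FreeGroup.IsReduced (a :: L)) :
    l a.1 - w a.1 < signedCoord π a (FreeGroup.lift f (FreeGroup.mk (a :: L)) p) := by
  rw [lift_mk_cons_apply, h.signedCoord_letterIsometry]
  suffices -w a.1 < signedCoord π a (FreeGroup.lift f (FreeGroup.mk L) p) by linarith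
  induction L generalizing a with
  | nil => exact (abs_lt.1 (h.abs_signedCoord_base_lt a)).1
  | cons b L ih =>
    rw [FreeGroup.isReduced_cons_cons] at hL
    refine h.neg_width_lt_signedCoord hL.1 ?_
    rw [lift_mk_cons_apply, h.signedCoord_letterIsometry]
    linarith [ih hL.2, h.width_lt b.1, h.width_pos b.1]

/-- For the word `a b ⋯`, pull back by `a`: the resulting geodesic has to cross the set
`signedCoord π b = l b.1 / 2`, before which the coordinate of `a` has changed by at least `δ`. -/
lemma mul_length_le_dist (hX : IsGeodesicSpace X) {a : α × Bool} {L : List (α × Bool)}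
    (hL : FreeGroup.IsReduced (a :: L)) {x : X} (hx : signedCoord π a x ≤ l a.1 / 2) :
    δ * L.length ≤ dist x (FreeGroup.lift f (FreeGroup.mk (a :: L)) p) := by
  induction L generalizing a x with
  | nil => simp
  | cons b L ih =>
    rw [FreeGroup.isReduced_cons_cons] at hL
    obtain ⟨hab, hL⟩ := hL
    obtain ⟨x, rfl⟩ := (letterIsometry f a).surjective x
    rw [h.signedCoord_letterIsometry] at hx
    rw [lift_mk_cons_apply, (letterIsometry f a).dist_eq]
    have hP := h.lt_signedCoord_lift_mk hL
    set P := FreeGroup.lift f (FreeGroup.mk (b :: L)) p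
    have hxb : signedCoord π b x < w b.1 := by
      by_contra! hxb
      linarith [h.neg_width_lt_signedCoord hab hxb, h.width_lt a.1]
    obtain ⟨z, hz, hdist⟩ :=
      hX.exists_eq_of_mem_Icc (h.lipschitzWith_signedCoord b).continuous (x := x) (y := P)
        (a := l b.1 / 2) ⟨by linarith [h.width_lt b.1], by linarith [h.width_lt b.1]⟩
    have hza := h.neg_width_lt_signedCoord hab (hz ▸ (h.width_lt b.1).le)
    have hxz := h.signedCoord_sub_le_dist a z x
    have hzP := ih hL hz.le
    rw [dist_comm] at hxz
    rw [List.length_cons, Nat.cast_succ]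
    linarith [h.gap_le a.1]

theorem injective_lift : Function.Injective (FreeGroup.lift f) := by
  classical
  rw [injective_iff_map_eq_one]
  intro v hv
  rw [← FreeGroup.toWord_eq_nil_iff]
  have hred := FreeGroup.isReduced_toWord (x := v)
  rw [← FreeGroup.mk_toWord (x := v)] at hv
  generalize v.toWord = u at *
  rcases u with _ | ⟨a, L⟩
  · rfl
  · have hlt := h.lt_signedCoord_lift_mk hred
    rw [hv, IsometryEquiv.coe_one, id] at hlt
    linarith [(abs_lt.1 (h.abs_signedCoord_base_lt a)).2, h.width_lt a.1]

lemma mul_norm_sub_le_dist_base (hX : IsGeodesicSpace X) [DecidableEq α] (v : FreeGroup α) :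
    δ * v.norm - δ ≤ dist p (FreeGroup.lift f v p) := by
  have hred := FreeGroup.isReduced_toWord (x := v)
  rw [FreeGroup.norm]
  conv_rhs => rw [← FreeGroup.mk_toWord (x := v)]
  generalize v.toWord = u at *
  rcases u with _ | ⟨a, L⟩
  · simpa using h.gap_pos.le.trans' (neg_nonpos.2 h.gap_pos.le)
  · have hp := (abs_lt.1 (h.abs_signedCoord_base_lt a)).2.trans (h.width_lt a.1)
    have := h.mul_length_le_dist hX hred hp.le
    rw [List.length_cons, Nat.cast_succ]
    linarith

theorem mul_norm_sub_le_dist (hX : IsGeodesicSpace X) [DecidableEq α] (y : X) (v : FreeGroup α) :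
    δ * v.norm - (δ + 2 * dist y p) ≤ dist y (FreeGroup.lift f v y) := by
  have hbase := h.mul_norm_sub_le_dist_base hX v
  have htriangle := dist_triangle4 p y (FreeGroup.lift f v y) (FreeGroup.lift f v p)
  rw [(FreeGroup.lift f v).dist_eq, dist_comm p y] at htriangle
  linarith

end PingPongSystem

end PingPong

lemma exp_mul_exp_neg (s : ℝ) : Real.exp s * Real.exp (-s) = 1 := by
  rw [← Real.exp_add, add_neg_cancel, Real.exp_zero]

lemma exists_exp_mul_eq {a d : ℝ} (ha : 0 < a) (hd : 0 < d) : ∃ x, Real.exp x * a = d :=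
  ⟨Real.log (d / a), by rw [Real.exp_log (div_pos hd ha), div_mul_cancel₀ _ ha.ne']⟩

lemma exists_exp_sq_mul_eq {a b c d : ℝ} (ha : 0 < a) (hb : 0 < b) (hc : 0 < c) (hd : 0 < d) :
    ∃ s t, (Real.exp s * Real.exp t) ^ 2 * a = d ∧ Real.exp s ^ 2 * b = Real.exp t ^ 2 * c := by
  obtain ⟨x, rfl⟩ := exists_exp_mul_eq ha hd
  obtain ⟨y, rfl⟩ := exists_exp_mul_eq hb hc
  refine ⟨(x + y) / 4, (x - y) / 4, ?_, ?_⟩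
  · rw [← Real.exp_add, ← Real.exp_nat_mul]
    ring_nf
  · rw [← mul_assoc, ← Real.exp_nat_mul, ← Real.exp_nat_mul, ← Real.exp_add]
    ring_nf

lemma tanh_pos_of_pos {x : ℝ} (hx : 0 < x) : 0 < Real.tanh x := by
  rw [Real.tanh_eq_sinh_div_cosh]
  exact div_pos (Real.sinh_pos_iff.2 hx) (Real.cosh_pos x)

lemma tanh_mul_cosh_le_sinh {x y : ℝ} (h : x ≤ y) :
    Real.tanh x * Real.cosh y ≤ Real.sinh y := by
  have := Real.sinh_nonneg_iff.2 (sub_nonneg.2 h)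
  rw [Real.sinh_sub] at this
  rw [Real.tanh_eq_sinh_div_cosh, div_mul_eq_mul_div, div_le_iff₀ (Real.cosh_pos x)]
  linarith

lemma cosh_mul_cosh_le_cosh_add {a b : ℝ} (ha : 0 ≤ a) (hb : 0 ≤ b) :
    Real.cosh a * Real.cosh b ≤ Real.cosh (a + b) := by
  rw [Real.cosh_add]
  exact le_add_of_nonneg_right (mul_nonneg (Real.sinh_nonneg_iff.2 ha) (Real.sinh_nonneg_iff.2 hb))

section HyperbolicPlane

/-! ### The hyperboloid model -/

/-- The Lorentz form of signature `(1, 2)` on `ℝ³`, in the coordinates in which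
`lorentzForm u u = u₀ u₂ - u₁²` is the determinant of the symmetric matrix with entries
`u₀, u₁, u₁, u₂`. -/
noncomputable def lorentzForm : LinearMap.BilinForm ℝ (Fin 3 → ℝ) :=
  Matrix.toBilin' !![0, 0, 1 / 2; 0, -1, 0; 1 / 2, 0, 0]

local notation "B" => lorentzForm

lemma lorentzForm_apply (u v : Fin 3 → ℝ) :
    B u v = (u 0 * v 2 + u 2 * v 0) / 2 - u 1 * v 1 := by
  simp only [lorentzForm, Matrix.toBilin'_apply, Fin.sum_univ_three, Matrix.of_apply,
    Matrix.cons_val]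
  ring

lemma lorentzForm_comm (u v : Fin 3 → ℝ) : B u v = B v u := by
  simp only [lorentzForm_apply]
  ring

lemma det_mul_det_eq_lorentzForm (a b : Fin 3 → Fin 3 → ℝ) :
    (Matrix.of a).det * (Matrix.of b).det = 4 * (Matrix.of fun i j => B (a i) (b j)).det := by
  simp only [Matrix.det_fin_three, Matrix.of_apply, lorentzForm_apply]
  ring

lemma eq_zero_of_lorentzForm_eq_zero {u v : Fin 3 → ℝ} (hv : 0 < B v v) (huv : B u v = 0)
    (hu : 0 ≤ B u u) : u = 0 := by
  simp only [lorentzForm_apply] at hv huv hu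
  have hv₂ : v 2 ≠ 0 := by
    intro h
    simp only [h] at hv
    nlinarith [sq_nonneg (v 1)]
  have hsq : (v 2 * u 1 - u 2 * v 1) ^ 2 + u 2 ^ 2 * (v 0 * v 2 - v 1 ^ 2) ≤ 0 := by
    have : 0 ≤ v 2 ^ 2 * ((u 0 * u 2 + u 2 * u 0) / 2 - u 1 * u 1) := by positivity
    linear_combination this + 2 * u 2 * v 2 * huv
  have hu₂ : u 2 = 0 := by
    have : u 2 ^ 2 * (v 0 * v 2 - v 1 ^ 2) ≤ 0 := by
      linarith [sq_nonneg (v 2 * u 1 - u 2 * v 1)]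
    have : u 2 ^ 2 ≤ 0 := nonpos_of_mul_nonpos_left this (by linarith)
    exact pow_eq_zero_iff two_ne_zero |>.1 (le_antisymm this (sq_nonneg _))
  have hu₁ : u 1 = 0 := by
    simp only [hu₂] at hu
    nlinarith [sq_nonneg (u 1)]
  have hu₀ : u 0 = 0 := by simpa [hu₁, hu₂, hv₂] using huv
  ext i
  fin_cases i <;> assumption

lemma lorentzForm_self_nonpos {u v : Fin 3 → ℝ} (hv : 0 < B v v) (huv : B u v = 0) :
    B u u ≤ 0 := by
  by_contra! hu
  simp [eq_zero_of_lorentzForm_eq_zero hv huv hu.le] at hu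

/-- The combination of `u` and `w` orthogonal to the timelike vector `v` is not spacelike, hence
zero. -/
lemma smul_eq_smul_of_lorentzForm_nonpos {u v w : Fin 3 → ℝ} (hv : 0 < B v v)
    (hu : 0 ≤ B u u) (hw : 0 ≤ B w w) (huv : 0 ≤ B u v) (hwv : 0 ≤ B w v)
    (huw : B u w ≤ 0) : B w v • u = B u v • w := by
  rw [← sub_eq_zero]
  refine eq_zero_of_lorentzForm_eq_zero hv ?_ ?_
  · simp only [map_sub, map_smul, LinearMap.sub_apply, LinearMap.smul_apply, smul_eq_mul]
    ring
  · have hexpand : B (B w v • u - B u v • w) (B w v • u - B u v • w) =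
        B w v ^ 2 * B u u + B u v ^ 2 * B w w + 2 * (B w v * B u v * -B u w) := by
      simp only [map_sub, map_smul, LinearMap.sub_apply, LinearMap.smul_apply, smul_eq_mul,
        lorentzForm_comm w u]
      ring
    rw [hexpand]
    have := neg_nonneg.2 huw
    positivity

lemma lorentzForm_pos {u v w : Fin 3 → ℝ} (hv : 0 < B v v) (hu : 0 ≤ B u u) (hw : 0 < B w w)
    (huv : 0 < B u v) (hwv : 0 < B w v) : 0 < B u w := by
  by_contra! huw
  have h := smul_eq_smul_of_lorentzForm_nonpos hv hu hw.le huv.le hwv.le huw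
  have h := congrArg (fun z => B z w) h
  simp only [map_smul, LinearMap.smul_apply, smul_eq_mul] at h
  linarith [mul_pos huv hw, mul_nonpos_of_nonneg_of_nonpos hwv.le huw]

/-- Here `p`, `q` are two points of the hyperboloid, `n`, `n'` unit vectors orthogonal to both,
and `{x | a * B x p ≤ B x n}`, `{x | b * B x q ≤ B x n'}` are half-planes; they are disjoint
because the sum of their normals `a p - n`, `b q - n'` is timelike. -/
lemma lorentzForm_lt_or_lt {p q n n' x : Fin 3 → ℝ} {a b : ℝ} (hp : B p p = 1)
    (hq : B q q = 1) (hn : B n n = -1) (hn' : B n' n' = -1) (hpn : B p n = 0)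
    (hpn' : B p n' = 0) (hqn : B q n = 0) (hqn' : B q n' = 0) (ha : 0 < a) (hb : 0 < b)
    (hab : 2 < a * b * B p q) (hx : 0 < B x x) (hxp : 0 < B x p) :
    B x n < a * B x p ∨ B x n' < b * B x q := by
  by_contra! h
  have hpq : 0 < B p q := pos_of_mul_pos_right (two_pos.trans hab) (by positivity)
  have hnn' : -1 ≤ B n n' := by
    have := lorentzForm_self_nonpos (u := n - n') (v := p) (by simp [hp])
      (by simp [lorentzForm_comm _ p, hpn, hpn'])
    simp only [map_sub, LinearMap.sub_apply, hn, hn', lorentzForm_comm n' n] at this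
    linarith
  set u := a • p + b • q - n - n' with hu
  have hup : 0 < B u p := by
    simp only [hu, map_add, map_sub, map_smul, LinearMap.add_apply, LinearMap.sub_apply,
      LinearMap.smul_apply, smul_eq_mul, hp, lorentzForm_comm _ p, hpn, hpn']
    linarith [mul_pos hb hpq]
  have huu : 0 < B u u := by
    simp only [hu, map_add, map_sub, map_smul, LinearMap.add_apply, LinearMap.sub_apply,
      LinearMap.smul_apply, smul_eq_mul, lorentzForm_comm q p, lorentzForm_comm n, hp, hq, hpn,
      hpn', hqn, hqn', lorentzForm_comm n' p, lorentzForm_comm n' q, hn, hn']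
    rw [lorentzForm_comm n' n]
    linarith [sq_pos_of_pos ha, sq_pos_of_pos hb]
  have hxu := lorentzForm_pos (hp ▸ one_pos) hx.le huu hxp hup
  simp only [hu, map_add, map_sub, map_smul, smul_eq_mul] at hxu
  linarith

/-- The embedding of the half-plane onto the sheet `{u | B u u = 1, 0 < u 2}` of the
hyperboloid, under which `cosh (dist x y)` becomes a bilinear expression. -/
noncomputable def toHyperboloid (z : ℍ) : Fin 3 → ℝ :=
  ![(z.re ^ 2 + z.im ^ 2) / z.im, z.re / z.im, 1 / z.im]

local notation "ι" => toHyperboloid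

lemma lorentzForm_toHyperboloid (x y : ℍ) : B (ι x) (ι y) = Real.cosh (dist x y) := by
  have hx := x.im_ne_zero
  have hy := y.im_ne_zero
  simp only [lorentzForm_apply, toHyperboloid, UpperHalfPlane.cosh_dist', Matrix.cons_val]
  field_simp
  ring

lemma lorentzForm_toHyperboloid_self (x : ℍ) : B (ι x) (ι x) = 1 := by
  simp [lorentzForm_toHyperboloid]

lemma lorentzForm_toHyperboloid_pos (x y : ℍ) : 0 < B (ι x) (ι y) := by
  simpa only [lorentzForm_toHyperboloid] using Real.cosh_pos _

lemma exists_toHyperboloid_eq {u : Fin 3 → ℝ} {x : ℍ} (hu : B u u = 1) (hux : 0 < B u (ι x)) :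
    ∃ z, ι z = u := by
  have hu₂ : 0 < u 2 := by
    have h := lorentzForm_pos (u := ![1, 0, 0]) (lorentzForm_toHyperboloid_pos x x)
      (by simp [lorentzForm_apply]) (hu ▸ one_pos)
      (by simp [lorentzForm_apply, toHyperboloid, x.im_pos]) hux
    simpa [lorentzForm_apply] using h
  refine ⟨⟨⟨u 1 / u 2, 1 / u 2⟩, by positivity⟩, ?_⟩
  rw [lorentzForm_apply] at hu
  have : u 0 = (1 + u 1 ^ 2) / u 2 := by field_simp; linarith
  ext i
  fin_cases i <;> simp [toHyperboloid, this] <;> field_simp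
  ring

lemma injective_toHyperboloid : Function.Injective ι := fun x y h => by
  have := lorentzForm_toHyperboloid x y
  rw [h, lorentzForm_toHyperboloid_self, ← Real.cosh_zero] at this
  exact dist_eq_zero.1 (Real.cosh_injOn Set.self_mem_Ici dist_nonneg this).symm

/-- With `τ` the unit tangent vector at `x` pointing to `y`, the geodesic is the curve
`cosh s • x + sinh s • τ` on the hyperboloid. -/
lemma isGeodesicSpace_upperHalfPlane : IsGeodesicSpace ℍ := by
  intro x y
  obtain hd | hd := (dist_nonneg (x := x) (y := y)).eq_or_lt
  · obtain rfl := dist_eq_zero.1 hd.symm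
    refine ⟨fun _ => x, rfl, rfl, fun s hs t ht => ?_⟩
    rw [dist_self, Set.Icc_self, Set.mem_singleton_iff] at hs ht
    simp [hs, ht]
  set d := dist x y with hd_def
  have hsinh : Real.sinh d ≠ 0 := (Real.sinh_pos_iff.2 hd).ne'
  set τ : Fin 3 → ℝ := (Real.sinh d)⁻¹ • (ι y - Real.cosh d • ι x) with hτ
  have hxτ : B (ι x) τ = 0 := by
    simp [hτ, lorentzForm_toHyperboloid, ← hd_def]
  have hττ : B τ τ = -1 := by
    rw [hτ]
    simp only [map_smul, map_sub, LinearMap.smul_apply, LinearMap.sub_apply, smul_eq_mul,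
      lorentzForm_toHyperboloid, dist_self, Real.cosh_zero, dist_comm y x, ← hd_def]
    field_simp
    linarith [Real.cosh_sq d]
  have hcurve (s t : ℝ) :
      B (Real.cosh s • ι x + Real.sinh s • τ) (Real.cosh t • ι x + Real.sinh t • τ) =
        Real.cosh (s - t) := by
    simp only [map_add, map_smul, LinearMap.add_apply, LinearMap.smul_apply, smul_eq_mul,
      lorentzForm_toHyperboloid_self, hxτ, lorentzForm_comm τ (ι x), hττ, Real.cosh_sub]
    ring
  have hmem (s : ℝ) : ∃ z, ι z = Real.cosh s • ι x + Real.sinh s • τ := by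
    refine exists_toHyperboloid_eq (x := x) (by simpa using hcurve s s) ?_
    simpa [hxτ, lorentzForm_comm τ, lorentzForm_toHyperboloid_self] using Real.cosh_pos s
  choose c hc using hmem
  refine ⟨c, injective_toHyperboloid (by simp [hc]), injective_toHyperboloid ?_, ?_⟩
  · rw [hc, hτ, smul_smul, mul_inv_cancel₀ hsinh, one_smul, add_sub_cancel]
  · intro s _ t _
    refine Real.cosh_injOn (Set.mem_Ici.2 dist_nonneg) (Set.mem_Ici.2 (abs_nonneg _)) ?_
    rw [Real.cosh_abs, ← lorentzForm_toHyperboloid, hc, hc, hcurve]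

/-! ### Fermi coordinates of a geodesic line -/

/-- The null vector spanning the endpoint `γ(∞)` of a geodesic line `γ`, normalized so that
`γ s = exp s • forwardEnd γ + exp (-s) • backwardEnd γ` on the hyperboloid. -/
noncomputable def forwardEnd (γ : ℝ → ℍ) : Fin 3 → ℝ :=
  (2 * Real.sinh 1)⁻¹ • (ι (γ 1) - Real.exp (-1) • ι (γ 0))

/-- The null vector spanning the endpoint `γ(-∞)` of a geodesic line `γ`. -/
noncomputable def backwardEnd (γ : ℝ → ℍ) : Fin 3 → ℝ :=
  forwardEnd fun s => γ (-s)

/-- The parameter of the point of the geodesic line `γ` nearest to `x`. -/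
noncomputable def foot (γ : ℝ → ℍ) (x : ℍ) : ℝ :=
  Real.log (B (ι x) (backwardEnd γ) / B (ι x) (forwardEnd γ)) / 2

/-- The signed distance of `x` from the geodesic line `γ`. -/
noncomputable def height (γ : ℝ → ℍ) (x : ℍ) : ℝ :=
  Real.arsinh (Matrix.of ![forwardEnd γ, backwardEnd γ, ι x]).det

/-- The unit tangent vector of the geodesic line `γ` at `γ s`, as a vector in Minkowski space. -/
noncomputable def lineTangent (γ : ℝ → ℍ) (s : ℝ) : Fin 3 → ℝ :=
  Real.exp s • forwardEnd γ - Real.exp (-s) • backwardEnd γ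

variable {γ γ' : ℝ → ℍ}

lemma isometry_comp_neg (hγ : Isometry γ) : Isometry fun s => γ (-s) :=
  hγ.comp (IsometryEquiv.neg ℝ).isometry

lemma lorentzForm_line_line (hγ : Isometry γ) (s t : ℝ) :
    B (ι (γ s)) (ι (γ t)) = Real.cosh (s - t) := by
  rw [lorentzForm_toHyperboloid, hγ.dist_eq, Real.dist_eq, Real.cosh_abs]

lemma lorentzForm_line_forwardEnd (hγ : Isometry γ) (s : ℝ) :
    B (ι (γ s)) (forwardEnd γ) = Real.exp (-s) / 2 := by
  have h : Real.sinh 1 ≠ 0 := (Real.sinh_pos_iff.2 one_pos).ne'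
  simp only [forwardEnd, map_smul, map_sub, smul_eq_mul, lorentzForm_line_line hγ, sub_zero,
    Real.cosh_sub]
  field_simp
  linear_combination Real.cosh s * Real.cosh_sub_sinh 1 + Real.sinh 1 * Real.cosh_sub_sinh s

lemma lorentzForm_line_backwardEnd (hγ : Isometry γ) (s : ℝ) :
    B (ι (γ s)) (backwardEnd γ) = Real.exp s / 2 := by
  simpa [backwardEnd] using lorentzForm_line_forwardEnd (isometry_comp_neg hγ) (-s)

lemma lorentzForm_forwardEnd_self (hγ : Isometry γ) : B (forwardEnd γ) (forwardEnd γ) = 0 := by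
  conv_lhs => enter [1]; unfold forwardEnd
  simp only [map_smul, map_sub, LinearMap.smul_apply, LinearMap.sub_apply, smul_eq_mul,
    lorentzForm_line_forwardEnd hγ, neg_zero, Real.exp_zero]
  ring

lemma lorentzForm_backwardEnd_self (hγ : Isometry γ) : B (backwardEnd γ) (backwardEnd γ) = 0 :=
  lorentzForm_forwardEnd_self (isometry_comp_neg hγ)

lemma lorentzForm_forwardEnd_backwardEnd (hγ : Isometry γ) :
    B (forwardEnd γ) (backwardEnd γ) = 1 / 2 := by
  have h : Real.sinh 1 ≠ 0 := (Real.sinh_pos_iff.2 one_pos).ne'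
  simp only [forwardEnd, map_smul, map_sub, LinearMap.smul_apply, LinearMap.sub_apply, smul_eq_mul,
    lorentzForm_line_backwardEnd hγ, Real.exp_zero]
  field_simp
  rw [Real.sinh_eq]
  ring

lemma toHyperboloid_line (hγ : Isometry γ) (s : ℝ) :
    ι (γ s) = Real.exp s • forwardEnd γ + Real.exp (-s) • backwardEnd γ := by
  rw [← sub_eq_zero]
  refine eq_zero_of_lorentzForm_eq_zero (v := ι (γ 0)) (lorentzForm_toHyperboloid_pos _ _) ?_
    (le_of_eq ?_)
  · simp only [map_add, map_sub, map_smul, LinearMap.add_apply, LinearMap.sub_apply,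
      LinearMap.smul_apply, smul_eq_mul, lorentzForm_line_line hγ,
      lorentzForm_comm _ (ι (γ 0)), lorentzForm_line_forwardEnd hγ,
      lorentzForm_line_backwardEnd hγ, Real.exp_zero, neg_zero]
    rw [sub_zero, Real.cosh_eq]
    ring
  · simp only [map_add, map_sub, map_smul, LinearMap.add_apply, LinearMap.sub_apply,
      LinearMap.smul_apply, smul_eq_mul, lorentzForm_line_line hγ,
      lorentzForm_comm _ (ι (γ s)), lorentzForm_line_forwardEnd hγ,
      lorentzForm_line_backwardEnd hγ, lorentzForm_forwardEnd_self hγ,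
      lorentzForm_backwardEnd_self hγ, lorentzForm_comm (backwardEnd γ),
      lorentzForm_forwardEnd_backwardEnd hγ]
    rw [sub_self, Real.cosh_zero]
    linear_combination exp_mul_exp_neg s

lemma lorentzForm_forwardEnd_pos (hγ : Isometry γ) (x : ℍ) : 0 < B (ι x) (forwardEnd γ) := by
  rw [lorentzForm_comm]
  refine lorentzForm_pos (v := ι (γ 0)) (lorentzForm_toHyperboloid_pos _ _)
    (lorentzForm_forwardEnd_self hγ).ge (lorentzForm_toHyperboloid_pos _ _) ?_
    (lorentzForm_toHyperboloid_pos _ _)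
  rw [lorentzForm_comm, lorentzForm_line_forwardEnd hγ]
  positivity

lemma lorentzForm_backwardEnd_pos (hγ : Isometry γ) (x : ℍ) : 0 < B (ι x) (backwardEnd γ) :=
  lorentzForm_forwardEnd_pos (isometry_comp_neg hγ) x

lemma sinh_height_mul_sinh_height (hγ : Isometry γ) (x y : ℍ) :
    Real.sinh (height γ x) * Real.sinh (height γ y) =
      2 * (B (ι x) (forwardEnd γ) * B (ι y) (backwardEnd γ) +
        B (ι x) (backwardEnd γ) * B (ι y) (forwardEnd γ)) - B (ι x) (ι y) := by
  rw [height, height, Real.sinh_arsinh, Real.sinh_arsinh, det_mul_det_eq_lorentzForm,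
    Matrix.det_fin_three]
  simp only [Matrix.of_apply, Matrix.cons_val, lorentzForm_forwardEnd_self hγ,
    lorentzForm_backwardEnd_self hγ, lorentzForm_forwardEnd_backwardEnd hγ,
    lorentzForm_comm (backwardEnd γ), lorentzForm_comm (forwardEnd γ) (ι y)]
  ring

lemma cosh_height_sq (hγ : Isometry γ) (x : ℍ) :
    Real.cosh (height γ x) ^ 2 = 4 * (B (ι x) (forwardEnd γ) * B (ι x) (backwardEnd γ)) := by
  have := sinh_height_mul_sinh_height hγ x x
  rw [lorentzForm_toHyperboloid_self] at this
  linarith [Real.cosh_sq (height γ x)]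

lemma exp_foot_sq (hγ : Isometry γ) (x : ℍ) :
    Real.exp (foot γ x) ^ 2 = B (ι x) (backwardEnd γ) / B (ι x) (forwardEnd γ) := by
  rw [← Real.exp_nat_mul, foot, Nat.cast_ofNat, mul_div_cancel₀ _ two_ne_zero, Real.exp_log]
  exact div_pos (lorentzForm_backwardEnd_pos hγ x) (lorentzForm_forwardEnd_pos hγ x)

lemma lorentzForm_backwardEnd (hγ : Isometry γ) (x : ℍ) :
    B (ι x) (backwardEnd γ) = Real.cosh (height γ x) * Real.exp (foot γ x) / 2 := by
  have hN := lorentzForm_forwardEnd_pos hγ x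
  have hM := lorentzForm_backwardEnd_pos hγ x
  refine (pow_left_inj₀ hM.le (by positivity) two_ne_zero).1 ?_
  rw [div_pow, mul_pow, cosh_height_sq hγ, exp_foot_sq hγ]
  field_simp
  ring

lemma lorentzForm_forwardEnd (hγ : Isometry γ) (x : ℍ) :
    B (ι x) (forwardEnd γ) = Real.cosh (height γ x) * Real.exp (-foot γ x) / 2 := by
  have hN := lorentzForm_forwardEnd_pos hγ x
  have hM := lorentzForm_backwardEnd_pos hγ x
  refine (pow_left_inj₀ hN.le (by positivity) two_ne_zero).1 ?_
  rw [div_pow, mul_pow, cosh_height_sq hγ, Real.exp_neg, inv_pow, exp_foot_sq hγ]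
  field_simp
  ring

lemma cosh_dist_eq_foot_height (hγ : Isometry γ) (x y : ℍ) :
    Real.cosh (dist x y) = Real.cosh (height γ x) * Real.cosh (height γ y) *
      Real.cosh (foot γ x - foot γ y) - Real.sinh (height γ x) * Real.sinh (height γ y) := by
  rw [sinh_height_mul_sinh_height hγ, lorentzForm_toHyperboloid]
  simp only [lorentzForm_forwardEnd hγ, lorentzForm_backwardEnd hγ]
  rw [Real.cosh_eq (_ - _), neg_sub, sub_eq_add_neg (foot γ x), sub_eq_add_neg (foot γ y),
    Real.exp_add, Real.exp_add]
  ring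

lemma foot_line (hγ : Isometry γ) (s : ℝ) : foot γ (γ s) = s := by
  rw [foot, lorentzForm_line_forwardEnd hγ, lorentzForm_line_backwardEnd hγ,
    div_div_div_cancel_right₀ two_ne_zero, ← Real.exp_sub, Real.log_exp]
  ring

lemma lorentzForm_line (hγ : Isometry γ) (x : ℍ) (s : ℝ) :
    B (ι x) (ι (γ s)) = Real.cosh (height γ x) * Real.cosh (foot γ x - s) := by
  rw [toHyperboloid_line hγ, map_add, map_smul, map_smul, lorentzForm_forwardEnd hγ,
    lorentzForm_backwardEnd hγ, Real.cosh_eq (_ - _), neg_sub, sub_eq_add_neg, sub_eq_add_neg s,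
    Real.exp_add, Real.exp_add, smul_eq_mul, smul_eq_mul]
  ring

lemma lorentzForm_lineTangent (hγ : Isometry γ) (x : ℍ) (s : ℝ) :
    B (ι x) (lineTangent γ s) = -(Real.cosh (height γ x) * Real.sinh (foot γ x - s)) := by
  rw [lineTangent, map_sub, map_smul, map_smul, lorentzForm_forwardEnd hγ,
    lorentzForm_backwardEnd hγ, Real.sinh_eq (_ - _), neg_sub, sub_eq_add_neg (foot γ x),
    sub_eq_add_neg s, Real.exp_add, Real.exp_add, smul_eq_mul, smul_eq_mul]
  ring

lemma lorentzForm_lineTangent_self (hγ : Isometry γ) (s : ℝ) :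
    B (lineTangent γ s) (lineTangent γ s) = -1 := by
  simp only [lineTangent, map_sub, map_smul, LinearMap.sub_apply, LinearMap.smul_apply, smul_eq_mul,
    lorentzForm_forwardEnd_self hγ, lorentzForm_backwardEnd_self hγ,
    lorentzForm_comm (backwardEnd γ) (forwardEnd γ), lorentzForm_forwardEnd_backwardEnd hγ]
  linear_combination -exp_mul_exp_neg s

lemma lipschitzWith_foot (hγ : Isometry γ) : LipschitzWith 1 (foot γ) := by
  refine LipschitzWith.of_dist_le_mul fun x y => ?_
  rw [NNReal.coe_one, one_mul, ← abs_of_nonneg (a := dist x y) dist_nonneg, Real.dist_eq,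
    ← Real.cosh_le_cosh, cosh_dist_eq_foot_height hγ]
  set a := height γ x
  set b := height γ y
  have hab : 1 ≤ Real.cosh a * Real.cosh b - Real.sinh a * Real.sinh b := by
    rw [← Real.cosh_sub]
    exact Real.one_le_cosh _
  have hcosh : 1 ≤ Real.cosh a * Real.cosh b :=
    one_le_mul_of_one_le_of_one_le (Real.one_le_cosh a) (Real.one_le_cosh b)
  linarith [mul_nonneg (sub_nonneg.2 hcosh) (sub_nonneg.2 (Real.one_le_cosh (foot γ x - foot γ y)))]

section Translation

variable {g : ℍ → ℍ} {l : ℝ}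

lemma cosh_height_mul_cosh_foot_map (hγ : Isometry γ) (hg : Isometry g)
    (hgγ : ∀ s, g (γ s) = γ (s + l)) (x : ℍ) (s : ℝ) :
    Real.cosh (height γ (g x)) * Real.cosh (foot γ (g x) - (s + l)) =
      Real.cosh (height γ x) * Real.cosh (foot γ x - s) := by
  rw [← lorentzForm_line hγ, ← lorentzForm_line hγ, ← hgγ, lorentzForm_toHyperboloid,
    lorentzForm_toHyperboloid, hg.dist_eq]

lemma cosh_height_map (hγ : Isometry γ) (hg : Isometry g) (hgγ : ∀ s, g (γ s) = γ (s + l))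
    (x : ℍ) : Real.cosh (height γ (g x)) = Real.cosh (height γ x) := by
  have h := cosh_height_mul_cosh_foot_map hγ hg hgγ x
  have h₁ := h (foot γ x)
  have h₂ := h (foot γ (g x) - l)
  rw [sub_self, Real.cosh_zero, mul_one] at h₁
  rw [sub_add_cancel, sub_self, Real.cosh_zero, mul_one] at h₂
  refine le_antisymm ?_ ?_
  · exact h₁ ▸ le_mul_of_one_le_right (Real.cosh_pos _).le (Real.one_le_cosh _)
  · exact h₂ ▸ le_mul_of_one_le_right (Real.cosh_pos _).le (Real.one_le_cosh _)

lemma foot_map (hγ : Isometry γ) (hg : Isometry g) (hgγ : ∀ s, g (γ s) = γ (s + l)) (x : ℍ) :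
    foot γ (g x) = foot γ x + l := by
  have h := cosh_height_mul_cosh_foot_map hγ hg hgγ x (foot γ x)
  rw [cosh_height_map hγ hg hgγ, sub_self, mul_right_inj' (Real.cosh_pos _).ne'] at h
  have := Real.cosh_le_cosh.1 h.le
  rw [abs_zero] at this
  linarith [abs_nonpos_iff.1 this]

lemma sinh_height_map_sq (hγ : Isometry γ) (hg : Isometry g) (hgγ : ∀ s, g (γ s) = γ (s + l))
    (x : ℍ) : Real.sinh (height γ (g x)) ^ 2 = Real.sinh (height γ x) ^ 2 := by
  rw [Real.sinh_sq, Real.sinh_sq, cosh_height_map hγ hg hgγ]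

lemma sinh_height_mul_map_map (hγ : Isometry γ) (hg : Isometry g)
    (hgγ : ∀ s, g (γ s) = γ (s + l)) (x : ℍ) :
    Real.sinh (height γ x) * Real.sinh (height γ (g (g x))) = Real.sinh (height γ x) ^ 2 := by
  have hcosh := cosh_height_map hγ hg hgγ
  have hfoot := foot_map hγ hg hgγ
  have h := congrArg Real.cosh (hg.dist_eq x (g x))
  rw [cosh_dist_eq_foot_height hγ, cosh_dist_eq_foot_height hγ, hcosh (g x), hcosh x,
    hfoot (g x), hfoot x, sub_add_cancel_left, sub_add_cancel_left] at h
  have hsq := sinh_height_map_sq hγ hg hgγ x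
  obtain h₀ | h₀ := eq_or_ne (Real.sinh (height γ (g x))) 0
  · rw [h₀, zero_pow two_ne_zero, eq_comm, pow_eq_zero_iff two_ne_zero] at hsq
    rw [hsq, zero_mul, zero_pow two_ne_zero]
  · rw [← hsq]
    refine mul_left_cancel₀ h₀ ?_
    linear_combination -Real.sinh (height γ x) * h - Real.sinh (height γ (g x)) * hsq

lemma cosh_dist_map_map (hγ : Isometry γ) (hg : Isometry g) (hgγ : ∀ s, g (γ s) = γ (s + l))
    (x : ℍ) :
    Real.cosh (dist x (g (g x))) = 1 + 2 * (Real.cosh (height γ x) * Real.sinh l) ^ 2 := by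
  have hcosh := cosh_height_map hγ hg hgγ
  have hfoot := foot_map hγ hg hgγ
  rw [cosh_dist_eq_foot_height hγ, sinh_height_mul_map_map hγ hg hgγ, hcosh, hcosh, hfoot, hfoot,
    Real.sinh_sq, show foot γ x - (foot γ x + l + l) = -(2 * l) by ring, Real.cosh_neg,
    Real.cosh_two_mul, Real.cosh_sq l]
  ring

end Translation

/-! ### Pairs of lines -/

lemma cosh_dist_line_of_forwardEnd_eq_smul (hγ : Isometry γ) (hγ' : Isometry γ') {q : ℝ}
    (hq : 0 < q) (h : forwardEnd γ' = q • forwardEnd γ) (t : ℝ) :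
    Real.cosh (dist (γ (t + Real.log q)) (γ' t)) =
      1 + B (backwardEnd γ) (backwardEnd γ') / q * Real.exp (-t) ^ 2 := by
  have hmixed : q * B (forwardEnd γ) (backwardEnd γ') = 1 / 2 := by
    rw [← lorentzForm_forwardEnd_backwardEnd hγ', h, map_smul, LinearMap.smul_apply, smul_eq_mul]
  rw [← lorentzForm_toHyperboloid, toHyperboloid_line hγ, toHyperboloid_line hγ', h]
  simp only [map_add, map_smul, LinearMap.add_apply, LinearMap.smul_apply, smul_eq_mul,
    lorentzForm_forwardEnd_self hγ, lorentzForm_comm (backwardEnd γ) (forwardEnd γ),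
    lorentzForm_forwardEnd_backwardEnd hγ, neg_add, Real.exp_add, Real.exp_neg (Real.log q),
    Real.exp_log hq]
  field_simp
  linear_combination 2 * q * exp_mul_exp_neg t + 2 * q * Real.exp t * Real.exp (-t) * hmixed

lemma exists_forwardEnd_eq_smul (hγ : Isometry γ) (hγ' : Isometry γ')
    (h : B (forwardEnd γ) (forwardEnd γ') ≤ 0) :
    ∃ q : ℝ, 0 < q ∧ forwardEnd γ' = q • forwardEnd γ := by
  refine ⟨2 * B (ι (γ 0)) (forwardEnd γ'), mul_pos two_pos (lorentzForm_forwardEnd_pos hγ' _), ?_⟩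
  have h := smul_eq_smul_of_lorentzForm_nonpos (lorentzForm_toHyperboloid_pos (γ 0) (γ 0))
    (lorentzForm_forwardEnd_self hγ).ge (lorentzForm_forwardEnd_self hγ').ge
    (by simpa only [lorentzForm_comm] using (lorentzForm_forwardEnd_pos hγ _).le)
    (by simpa only [lorentzForm_comm] using (lorentzForm_forwardEnd_pos hγ' _).le) h
  rw [lorentzForm_comm, lorentzForm_comm (forwardEnd γ), lorentzForm_line_forwardEnd hγ, neg_zero,
    Real.exp_zero] at h
  rw [mul_smul, h, smul_smul, mul_one_div_cancel two_ne_zero, one_smul]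

/-- If the two endpoints coincided, the lines would be asymptotic. -/
lemma lorentzForm_forwardEnd_forwardEnd_pos (hγ : Isometry γ) (hγ' : Isometry γ') {L : ℝ}
    (hL : 0 < L) (hdist : ∀ s t, L ≤ dist (γ s) (γ' t)) : 0 < B (forwardEnd γ) (forwardEnd γ') := by
  by_contra! hle
  obtain ⟨q, hq, hend⟩ := exists_forwardEnd_eq_smul hγ hγ' hle
  have hlim : Filter.Tendsto
      (fun t => 1 + B (backwardEnd γ) (backwardEnd γ') / q * Real.exp (-t) ^ 2)
      Filter.atTop (nhds 1) := by
    simpa using ((Real.tendsto_exp_neg_atTop_nhds_zero.pow 2).const_mul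
      (B (backwardEnd γ) (backwardEnd γ') / q)).const_add 1
  have hcosh : Real.cosh L ≤ 1 := ge_of_tendsto' hlim fun t => by
    rw [← cosh_dist_line_of_forwardEnd_eq_smul hγ hγ' hq hend, Real.cosh_le_cosh, abs_of_pos hL,
      abs_of_nonneg dist_nonneg]
    exact hdist _ _
  exact hcosh.not_gt (Real.one_lt_cosh.2 hL.ne')

lemma foot_eq_of_backwardEnd_eq (hγ : Isometry γ) {x : ℍ} {s : ℝ}
    (h : B (ι x) (backwardEnd γ) = Real.exp s ^ 2 * B (ι x) (forwardEnd γ)) : foot γ x = s := by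
  rw [foot, h, mul_div_cancel_right₀ _ (lorentzForm_forwardEnd_pos hγ x).ne', Real.log_pow,
    Real.log_exp, Nat.cast_ofNat, mul_div_cancel_left₀ _ two_ne_zero]

/-- The points `γ s` and `γ' t` are the ends of the common perpendicular; the equations for them
prescribe `exp (s + t)` and `exp (s - t)`. -/
lemma exists_foot_eq_foot_eq (hγ : Isometry γ) (hγ' : Isometry γ') {L : ℝ} (hL : 0 < L)
    (hdist : ∀ s t, L ≤ dist (γ s) (γ' t)) : ∃ s t, foot γ (γ' t) = s ∧ foot γ' (γ s) = t := by
  have hrev := isometry_comp_neg hγ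
  have hrev' := isometry_comp_neg hγ'
  obtain ⟨s, t, hadd, hsub⟩ := exists_exp_sq_mul_eq
    (lorentzForm_forwardEnd_forwardEnd_pos hγ hγ' hL hdist)
    (lorentzForm_forwardEnd_forwardEnd_pos hγ hrev' hL fun _ _ => hdist _ _)
    (lorentzForm_forwardEnd_forwardEnd_pos hrev hγ' hL fun _ _ => hdist _ _)
    (lorentzForm_forwardEnd_forwardEnd_pos hrev hrev' hL fun _ _ => hdist _ _)
  rw [← backwardEnd, ← backwardEnd] at hadd hsub
  refine ⟨s, t, foot_eq_of_backwardEnd_eq hγ ?_, foot_eq_of_backwardEnd_eq hγ' ?_⟩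
  · rw [lorentzForm_comm, lorentzForm_comm _ (forwardEnd γ)]
    simp only [toHyperboloid_line hγ', map_add, map_smul, smul_eq_mul, Real.exp_neg]
    field_simp
    linear_combination -hadd - hsub
  · simp only [toHyperboloid_line hγ, map_add, map_smul, LinearMap.add_apply, LinearMap.smul_apply,
      smul_eq_mul, Real.exp_neg]
    field_simp
    linear_combination -hadd + hsub

/-- The unit normal of the perpendicular to `γ` at `γ s`, pointing to the side of `x`. -/
lemma exists_normal (hγ : Isometry γ) {x : ℍ} {s w : ℝ} (hx : w ≤ |foot γ x - s|) :
    ∃ n, B n n = -1 ∧ (∀ y, foot γ y = s → B (ι y) n = 0) ∧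
      Real.tanh w * B (ι x) (ι (γ s)) ≤ B (ι x) n := by
  have hside : Real.tanh w * B (ι x) (ι (γ s)) ≤ |B (ι x) (lineTangent γ s)| := by
    rw [lorentzForm_line hγ, lorentzForm_lineTangent hγ, abs_neg, abs_mul, Real.abs_sinh,
      abs_of_pos (Real.cosh_pos _), mul_left_comm, ← Real.cosh_abs (_ - _)]
    gcongr
    exact tanh_mul_cosh_le_sinh hx
  have hortho (y : ℍ) (hy : foot γ y = s) : B (ι y) (lineTangent γ s) = 0 := by
    rw [lorentzForm_lineTangent hγ, hy, sub_self, Real.sinh_zero, mul_zero, neg_zero]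
  obtain hs | hs := abs_choice (B (ι x) (lineTangent γ s))
  · exact ⟨lineTangent γ s, lorentzForm_lineTangent_self hγ s, hortho, hs ▸ hside⟩
  · refine ⟨-lineTangent γ s, ?_, fun y hy => ?_, ?_⟩
    · simp [lorentzForm_lineTangent_self hγ]
    · simp [hortho y hy]
    · simpa [hs] using hside

lemma abs_foot_sub_lt_or_lt (hγ : Isometry γ) (hγ' : Isometry γ') {s t w w' : ℝ}
    (hs : foot γ (γ' t) = s) (ht : foot γ' (γ s) = t) (hw : 0 < w) (hw' : 0 < w')
    (hlt : 2 < Real.tanh w * Real.tanh w' * Real.cosh (dist (γ s) (γ' t))) (x : ℍ) :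
    |foot γ x - s| < w ∨ |foot γ' x - t| < w' := by
  by_contra! h
  obtain ⟨n, hn, hortho, hside⟩ := exists_normal hγ h.1
  obtain ⟨n', hn', hortho', hside'⟩ := exists_normal hγ' h.2
  have := lorentzForm_lt_or_lt (lorentzForm_toHyperboloid_self (γ s))
    (lorentzForm_toHyperboloid_self (γ' t)) hn hn' (hortho _ (foot_line hγ s)) (hortho' _ ht)
    (hortho _ hs) (hortho' _ (foot_line hγ' t)) (tanh_pos_of_pos hw) (tanh_pos_of_pos hw')
    (by rwa [lorentzForm_toHyperboloid]) (lorentzForm_toHyperboloid_pos x x)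
    (lorentzForm_toHyperboloid_pos x _)
  exact this.elim hside.not_gt hside'.not_gt

/-! ### Margulis tubes -/

lemma subset_hypConvexHull (A : Set ℍ) : A ⊆ hypConvexHull A :=
  Set.subset_sInter fun _ hC => hC.1

/-- A radius such that the `ε`-Margulis tube of a hyperbolic isometry of translation length
`l ≤ ε / 10` contains the neighbourhood of the axis of this radius. -/
noncomputable def tubeRadius (ε l : ℝ) : ℝ :=
  Real.arcosh (max 1 (Real.sinh (ε / 20) / Real.sinh l))

lemma cosh_tubeRadius (ε l : ℝ) :
    Real.cosh (tubeRadius ε l) = max 1 (Real.sinh (ε / 20) / Real.sinh l) :=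
  Real.cosh_arcosh (le_max_left _ _)

lemma tubeRadius_nonneg (ε l : ℝ) : 0 ≤ tubeRadius ε l :=
  Real.arcosh_nonneg (le_max_left _ _)

lemma cosh_tubeRadius_mul_sinh_le {ε l : ℝ} (hl : 0 < l) (hlε : l ≤ ε / 10) :
    Real.cosh (tubeRadius ε l) * Real.sinh l ≤ Real.sinh (ε / 2) := by
  have hsinh := Real.sinh_pos_iff.2 hl
  rw [cosh_tubeRadius, max_mul_of_nonneg _ _ hsinh.le, one_mul, div_mul_cancel₀ _ hsinh.ne']
  exact max_le (Real.sinh_le_sinh.2 (by linarith)) (Real.sinh_le_sinh.2 (by linarith))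

lemma tubeRadius_eq_zero {ε l : ℝ} (hl : 0 < l) (hlε : ε / 20 ≤ l) : tubeRadius ε l = 0 := by
  have := div_le_one_of_le₀ (Real.sinh_le_sinh.2 hlε) (Real.sinh_pos_iff.2 hl).le
  rw [tubeRadius, max_eq_left this, Real.arcosh_zero]

lemma dist_map_map_le_of_dist_le_tubeRadius (hγ : Isometry γ) {g : ℍ → ℍ} (hg : Isometry g)
    {ε l : ℝ} (hl : 0 < l) (hlε : l ≤ ε / 10) (hgγ : ∀ s, g (γ s) = γ (s + l)) {x : ℍ} {s : ℝ}
    (hx : dist x (γ s) ≤ tubeRadius ε l) : dist x (g (g x)) ≤ ε := by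
  have hheight : Real.cosh (height γ x) ≤ Real.cosh (tubeRadius ε l) := calc
    Real.cosh (height γ x) ≤ Real.cosh (height γ x) * Real.cosh (foot γ x - s) :=
      le_mul_of_one_le_right (Real.cosh_pos _).le (Real.one_le_cosh _)
    _ = Real.cosh (dist x (γ s)) := by rw [← lorentzForm_line hγ, lorentzForm_toHyperboloid]
    _ ≤ Real.cosh (tubeRadius ε l) :=
      Real.cosh_strictMonoOn.monotoneOn dist_nonneg (tubeRadius_nonneg ε l) hx
  have hsinh := Real.sinh_pos_iff.2 hl
  have hle : Real.cosh (height γ x) * Real.sinh l ≤ Real.sinh (ε / 2) :=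
    (mul_le_mul_of_nonneg_right hheight hsinh.le).trans (cosh_tubeRadius_mul_sinh_le hl hlε)
  have hcosh : Real.cosh (dist x (g (g x))) ≤ Real.cosh ε := by
    rw [cosh_dist_map_map hγ hg hgγ, ← mul_div_cancel₀ ε two_ne_zero, Real.cosh_two_mul,
      Real.cosh_sq]
    have := pow_le_pow_left₀ (mul_pos (Real.cosh_pos _) hsinh).le hle 2
    linarith
  rwa [Real.cosh_le_cosh, abs_of_nonneg dist_nonneg, abs_of_pos (by linarith)] at hcosh

/-- If `m = 1` then the radius is `0`, and if `2 ≤ m` then `g ^ 2` alone gives the inclusion. -/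
lemma closedBall_subset_margulisTube (hγ : Isometry γ) {g : ℍ ≃ᵢ ℍ} {ε l : ℝ} {m : ℕ}
    (hl : 0 < l) (hlε : l ≤ ε / 10) (hm : ε / 10 < (m + 1) * l) (hgγ : ∀ s, g (γ s) = γ (s + l))
    (s : ℝ) : Metric.closedBall (γ s) (tubeRadius ε l) ⊆ margulisTube ε g m := by
  intro x hx
  simp only [margulisTube, Set.mem_iUnion, Finset.mem_Icc, Set.mem_ofPred_eq, exists_prop]
  obtain rfl | rfl | hm₂ : m = 0 ∨ m = 1 ∨ 2 ≤ m := by lia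
  · rw [Nat.cast_zero, zero_add, one_mul] at hm
    exact absurd hlε hm.not_ge
  · rw [Nat.cast_one] at hm
    rw [tubeRadius_eq_zero hl (by linarith), Metric.mem_closedBall, dist_le_zero] at hx
    refine ⟨1, ⟨le_rfl, le_rfl⟩, ?_⟩
    rw [hx, pow_one, hgγ, hγ.dist_eq, dist_self_add_right, Real.norm_of_nonneg hl.le]
    linarith
  · refine ⟨2, ⟨one_le_two, hm₂⟩, ?_⟩
    rw [pow_two, IsometryEquiv.mul_apply]
    exact dist_map_map_le_of_dist_le_tubeRadius hγ g.isometry hl hlε hgγ hx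

/-- A lower bound for `tanh (l / 4) * cosh (tubeRadius ε l)` that does not depend on `l`. -/
noncomputable def tubeConstant (ε : ℝ) : ℝ :=
  Real.sinh (ε / 20) / (4 * Real.cosh ε ^ 3)

lemma tubeConstant_pos {ε : ℝ} (hε : 0 < ε) : 0 < tubeConstant ε := by
  have := Real.sinh_pos_iff.2 (show 0 < ε / 20 by positivity)
  have := Real.cosh_pos ε
  unfold tubeConstant
  positivity

lemma tubeConstant_le {ε l : ℝ} (hl : 0 < l) (hlε : l ≤ ε / 10) :
    tubeConstant ε ≤ Real.tanh (l / 4) * Real.cosh (tubeRadius ε l) := by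
  have hε : 0 < ε := by linarith
  have hcosh {r : ℝ} (h₀ : 0 ≤ r) (hr : r ≤ ε) : Real.cosh r ≤ Real.cosh ε :=
    Real.cosh_strictMonoOn.monotoneOn h₀ hε.le hr
  have := Real.cosh_pos
  have : 0 < Real.sinh (l / 4) := Real.sinh_pos_iff.2 (by positivity)
  have : 0 < Real.sinh (ε / 20) := Real.sinh_pos_iff.2 (by positivity)
  have hsinh_l : Real.sinh l =
      4 * (Real.sinh (l / 4) * Real.cosh (l / 4) * Real.cosh (l / 2)) := by
    rw [show l = 2 * (2 * (l / 4)) by ring, Real.sinh_two_mul, Real.sinh_two_mul]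
    ring_nf
  calc tubeConstant ε
      ≤ Real.sinh (ε / 20) / (4 * (Real.cosh (l / 4) ^ 2 * Real.cosh (l / 2))) := by
        unfold tubeConstant
        rw [pow_succ]
        gcongr
        · exact hcosh (by linarith) (by linarith)
        · exact hcosh (by linarith) (by linarith)
    _ = Real.tanh (l / 4) * (Real.sinh (ε / 20) / Real.sinh l) := by
        rw [hsinh_l, Real.tanh_eq_sinh_div_cosh]
        field_simp
    _ ≤ Real.tanh (l / 4) * Real.cosh (tubeRadius ε l) := by
        rw [cosh_tubeRadius]
        gcongr
        · exact (tanh_pos_of_pos (by positivity)).le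
        · exact le_max_right _ _

lemma two_lt_tanh_mul_tanh_mul_cosh {ε l l' D : ℝ} (hl : 0 < l) (hlε : l ≤ ε / 10) (hl' : 0 < l')
    (hlε' : l' ≤ ε / 10)
    (hD : tubeRadius ε l + tubeRadius ε l' + 2 / tubeConstant ε ^ 2 ≤ D) :
    2 < Real.tanh (l / 4) * Real.tanh (l' / 4) * Real.cosh D := by
  have hc := tubeConstant_pos (ε := ε) (by linarith)
  set c := tubeConstant ε
  set R := tubeRadius ε l
  set R' := tubeRadius ε l'
  have hR : 0 ≤ R := tubeRadius_nonneg ε l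
  have hR' : 0 ≤ R' := tubeRadius_nonneg ε l'
  have hL : 0 < 2 / c ^ 2 := by positivity
  have htanh := tanh_pos_of_pos (show 0 < l / 4 by positivity)
  have htanh' := tanh_pos_of_pos (show 0 < l' / 4 by positivity)
  calc (2 : ℝ) = c * c * (2 / c ^ 2) := by field_simp
    _ < c * c * Real.cosh (2 / c ^ 2) := by
        gcongr
        exact (Real.self_le_sinh_iff.2 hL.le).trans_lt (Real.sinh_lt_cosh _)
    _ ≤ Real.tanh (l / 4) * Real.cosh R * (Real.tanh (l' / 4) * Real.cosh R') *
          Real.cosh (2 / c ^ 2) := by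
        have := Real.cosh_pos
        gcongr
        · exact tubeConstant_le hl hlε
        · exact tubeConstant_le hl' hlε'
    _ = Real.tanh (l / 4) * Real.tanh (l' / 4) *
          (Real.cosh R * Real.cosh R' * Real.cosh (2 / c ^ 2)) := by ring
    _ ≤ Real.tanh (l / 4) * Real.tanh (l' / 4) * Real.cosh D := by
        gcongr
        calc Real.cosh R * Real.cosh R' * Real.cosh (2 / c ^ 2)
            ≤ Real.cosh (R + R') * Real.cosh (2 / c ^ 2) := by
              gcongr
              exact cosh_mul_cosh_le_cosh_add hR hR'
          _ ≤ Real.cosh (R + R' + 2 / c ^ 2) := cosh_mul_cosh_le_cosh_add (by positivity) hL.le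
          _ ≤ Real.cosh D :=
              Real.cosh_strictMonoOn.monotoneOn (Set.mem_Ici.2 (by positivity))
                (Set.mem_Ici.2 (hD.trans' (by positivity))) hD

lemma pingPongSystem_foot (hγ : Isometry γ) (hγ' : Isometry γ') {g g' : ℍ ≃ᵢ ℍ} {l l' s t : ℝ}
    (hl : 0 < l) (hl' : 0 < l') (hg : ∀ r, g (γ r) = γ (r + l))
    (hg' : ∀ r, g' (γ' r) = γ' (r + l')) (hs : foot γ (γ' t) = s) (ht : foot γ' (γ s) = t)
    (hlt : 2 < Real.tanh (l / 4) * Real.tanh (l' / 4) * Real.cosh (dist (γ s) (γ' t))) :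
    PingPongSystem ![g, g'] ![fun x => foot γ x - s, fun x => foot γ' x - t] ![l, l']
      ![l / 4, l' / 4] (min (l / 4) (l' / 4)) (γ s) := by
  have hsep := abs_foot_sub_lt_or_lt hγ hγ' hs ht (by positivity) (by positivity) hlt
  refine ⟨?_, ?_, by positivity, ?_, ?_, ?_⟩
  · have hlip {η : ℝ → ℍ} (hη : Isometry η) (r : ℝ) : LipschitzWith 1 fun x => foot η x - r := by
      simpa using (lipschitzWith_foot hη).sub (LipschitzWith.const r)
    exact Fin.forall_fin_two.2 ⟨hlip hγ s, hlip hγ' t⟩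
  · refine Fin.forall_fin_two.2 ⟨fun x => ?_, fun x => ?_⟩
    · change foot γ (g x) - s = foot γ x - s + l
      rw [foot_map hγ g.isometry hg, add_sub_right_comm]
    · change foot γ' (g' x) - t = foot γ' x - t + l'
      rw [foot_map hγ' g'.isometry hg', add_sub_right_comm]
  · refine Fin.forall_fin_two.2 ⟨(min_le_left _ _).trans_eq ?_, (min_le_right _ _).trans_eq ?_⟩
    · change l / 4 = l / 2 - l / 4
      ring
    · change l' / 4 = l' / 2 - l' / 4
      ring
  · intro i j hij x
    fin_cases i <;> fin_cases j
    · exact absurd rfl hij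
    · exact hsep x
    · exact (hsep x).symm
    · exact absurd rfl hij
  · refine Fin.forall_fin_two.2 ⟨?_, ?_⟩
    · simpa [foot_line hγ] using hl
    · simpa [ht] using hl'

theorem hyperbolic_pingpong_free_cc_general (ε : ℝ) (hε : 0 < ε) :
    ∃ L : ℝ, 0 < L ∧ ∀ (g h : ℍ ≃ᵢ ℍ) (γg γh : ℝ → ℍ), Isometry γg → Isometry γh →
      ∀ l l' : ℝ, 0 < l → l ≤ ε / 10 → 0 < l' → l' ≤ ε / 10 →
      (∀ s, g (γg s) = γg (s + l)) → (∀ s, h (γh s) = γh (s + l')) →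
      ∀ m m' : ℕ, ε / 10 < (m + 1) * l → ε / 10 < (m' + 1) * l' →
      (∀ p ∈ margulisTube ε g m, ∀ q ∈ margulisTube ε h m', L ≤ dist p q) →
      Function.Injective (FreeGroup.lift ![g, h] : FreeGroup (Fin 2) →* (ℍ ≃ᵢ ℍ)) ∧
      ∀ y : ℍ, ∃ c : ℝ, 0 < c ∧ ∃ C : ℝ, 0 ≤ C ∧ ∀ w : FreeGroup (Fin 2),
        c * w.norm - C ≤ dist y ((FreeGroup.lift ![g, h] : FreeGroup (Fin 2) →* (ℍ ≃ᵢ ℍ)) w y) := by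
  have hc := tubeConstant_pos hε
  have hL : 0 < 2 / tubeConstant ε ^ 2 := by positivity
  refine ⟨_, hL, fun g h γg γh hγg hγh l l' hl hlε hl' hlε' hg hh m m' hm hm' hdist => ?_⟩
  have hball := closedBall_subset_margulisTube hγg hl hlε hm hg
  have hball' := closedBall_subset_margulisTube hγh hl' hlε' hm' hh
  have hR := tubeRadius_nonneg ε
  obtain ⟨s, t, hs, ht⟩ := exists_foot_eq_foot_eq hγg hγh hL fun s t =>
    hdist _ (hball s (Metric.mem_closedBall_self (hR l)))
      _ (hball' t (Metric.mem_closedBall_self (hR l')))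
  have hD := isGeodesicSpace_upperHalfPlane.add_add_le_dist (hR l) (hR l') hL
    fun x hx y hy => hdist x (hball s hx) y (hball' t hy)
  have hpp := pingPongSystem_foot hγg hγh hl hl' hg hh hs ht
    (two_lt_tanh_mul_tanh_mul_cosh hl hlε hl' hlε' hD)
  have hδ := hpp.gap_pos
  exact ⟨hpp.injective_lift, fun y => ⟨_, hδ, _, by positivity,
    hpp.mul_norm_sub_le_dist isGeodesicSpace_upperHalfPlane y⟩⟩

end HyperbolicPlane

/-- Propositions 3.11 and 3.12 for `X = ℍ`: if the closed convex hulls of the Margulis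
tubes of two hyperbolic isometries `g, h` with equal translation lengths `l ≤ ε/10` are
at distance at least `L = L(ε)`, then `g, h` generate a free group of rank two which is
convex-cocompact: every orbit map of the free group `F₂` is a quasiisometric embedding. -/
theorem hyperbolic_pingpong_free_cc (ε : ℝ) (hε : 0 < ε) :
    ∃ L : ℝ, 0 < L ∧ ∀ (g h : UpperHalfPlane ≃ᵢ UpperHalfPlane)
      (γg γh : ℝ → UpperHalfPlane), Isometry γg → Isometry γh →
      ∀ l : ℝ, 0 < l → l ≤ ε / 10 →
      (∀ s : ℝ, g (γg s) = γg (s + l)) →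
      (∀ s : ℝ, h (γh s) = γh (s + l)) →
      (⨅ x : UpperHalfPlane, dist x (g x)) = l →
      (⨅ x : UpperHalfPlane, dist x (h x)) = l →
      ∀ m : ℕ, 1 ≤ m → (m : ℝ) * l ≤ ε / 10 → ε / 10 < ((m : ℝ) + 1) * l →
      (∀ p ∈ hypConvexHull (margulisTube ε g m),
        ∀ q ∈ hypConvexHull (margulisTube ε h m), L ≤ dist p q) →
      Function.Injective
        ⇑(FreeGroup.lift ![g, h] :
          FreeGroup (Fin 2) →* (UpperHalfPlane ≃ᵢ UpperHalfPlane)) ∧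
      ∀ y : UpperHalfPlane, ∃ c : ℝ, 0 < c ∧ ∃ C : ℝ, 0 ≤ C ∧
        ∀ w : FreeGroup (Fin 2),
          c * (FreeGroup.norm w : ℝ) - C ≤
            dist y (((FreeGroup.lift ![g, h] :
              FreeGroup (Fin 2) →* (UpperHalfPlane ≃ᵢ UpperHalfPlane)) w) y) := by
  obtain ⟨L, hL, hmain⟩ := hyperbolic_pingpong_free_cc_general ε hε
  refine ⟨L, hL, fun g h γg γh hγg hγh l hl hlε hg hh _ _ m _ _ hm hdist => ?_⟩
  exact hmain g h γg γh hγg hγh l l hl hlε hl hlε hg hh m m hm hm fun p hp q hq =>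
    hdist p (subset_hypConvexHull _ hp) q (subset_hypConvexHull _ hq)
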